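/- Let 2 ≤ δ ≤ Δ be integers and let G = K_{Δ,δ} be the complete bipartite graph with parts of sizes Δ and δ. Then there exists an inclusion-free proper edge colouring of G using at most Δ + ⌈Δ/(δ−1)⌉ colours. -/

import Mathlib

/-!
An edge colouring of `K_{Δ,δ}` is a `Δ × δ` array of colours; it is proper iff no colour repeats in
a row or a column, and the palettes are the sets of entries of the rows and of the columns.
A column palette has `Δ ≥ δ` elements, so if it were contained in a row palette the two would be
equal. Hence it suffices that every row contains, for each column, a colour missing from that
column (`isInclusionFree_arrayColoring`).

Write `K = Δ + ⌈Δ/(δ-1)⌉ = Δ + ⌊(Δ-1)/(δ-1)⌋ + 1`. In the cyclic array `(x, j) ↦ x + j mod K` with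
`x ∈ {0, …, K-1}` and `j ∈ {0, …, δ-1}`, delete the rows whose index `x` is a multiple of `δ`; exactly
`Δ` rows remain (enumerated by `rowIndex`). The colours now missing from column `j` are
`y + j mod K` with `y < K` a multiple of `δ`, so row `x` contains one of them as soon as some element
of the `δ` consecutive integers `x - j, …, x - j + (δ-1)` is congruent modulo `K` to such a `y`. This
holds: if the interval reaches `K`, use `K ≡ 0`; otherwise it contains a multiple of `δ`, which is
greater than `-δ`, hence nonnegative, and less than `K` (`exists_missing`).
-/

/-- The palette of a vertex `v` under an edge colouring `c` of `G`:
the set of colours appearing on edges incident with `v`. -/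
def palette {V : Type*} (G : SimpleGraph V) (c : Sym2 V → ℕ) (v : V) : Set ℕ :=
  {n : ℕ | ∃ u : V, G.Adj v u ∧ c s(v, u) = n}

/-- `c` is a proper edge colouring of `G`: adjacent edges receive distinct colours. -/
def IsProperEdgeColoring {V : Type*} (G : SimpleGraph V) (c : Sym2 V → ℕ) : Prop :=
  ∀ u v w : V, G.Adj u v → G.Adj u w → v ≠ w → c s(u, v) ≠ c s(u, w)

/-- `c` is an inclusion-free colouring of `G`: a proper edge colouring such that
for every edge `uv`, the palette of `u` is not contained in the palette of `v`. -/
def IsInclusionFree {V : Type*} (G : SimpleGraph V) (c : Sym2 V → ℕ) : Prop :=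
  IsProperEdgeColoring G c ∧ ∀ u v : V, G.Adj u v → ¬ palette G c u ⊆ palette G c v

/-- The inclusion chromatic index: the least number of colours admitting an
inclusion-free colouring of `G`. -/
noncomputable def inclusionChromaticIndex {V : Type*} (G : SimpleGraph V) : ℕ :=
  sInf {k : ℕ | ∃ c : Sym2 V → ℕ, IsInclusionFree G c ∧ ∀ e ∈ G.edgeSet, c e < k}

/-- The edge colouring of the complete bipartite graph given by an array `m`: the edge joining the
left vertex `i` and the right vertex `j` gets colour `m i j`. Pairs inside one part, which are not
edges, get the dummy colour `0`. -/
def arrayColoring {A B : Type*} (m : A → B → ℕ) : Sym2 (A ⊕ B) → ℕ :=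
  Sym2.lift ⟨fun u v => match u, v with
    | Sum.inl i, Sum.inr j => m i j
    | Sum.inr j, Sum.inl i => m i j
    | _, _ => 0, by rintro (i | i) (j | j) <;> rfl⟩

lemma palette_inl {A B : Type*} (m : A → B → ℕ) (i : A) :
    palette (completeBipartiteGraph A B) (arrayColoring m) (Sum.inl i) = Set.range (m i) := by
  ext n
  simp [palette, completeBipartiteGraph, arrayColoring]

lemma palette_inr {A B : Type*} (m : A → B → ℕ) (j : B) :
    palette (completeBipartiteGraph A B) (arrayColoring m) (Sum.inr j) =
      Set.range (fun i => m i j) := by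
  ext n
  simp [palette, completeBipartiteGraph, arrayColoring]

lemma isInclusionFree_arrayColoring {Δ δ : ℕ} (hδΔ : δ ≤ Δ) (m : Fin Δ → Fin δ → ℕ)
    (hrow : ∀ i, Function.Injective (m i)) (hcol : ∀ j, Function.Injective (fun i => m i j))
    (hmiss : ∀ i j, ∃ k, ∀ i', m i' j ≠ m i k) :
    IsInclusionFree (completeBipartiteGraph (Fin Δ) (Fin δ)) (arrayColoring m) := by
  have key : ∀ i j, ¬ Set.range (m i) ⊆ Set.range (fun i => m i j) := by
    intro i j h
    obtain ⟨k, hk⟩ := hmiss i j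
    obtain ⟨i', hi'⟩ := h ⟨k, rfl⟩
    exact hk i' hi'
  refine ⟨?_, ?_⟩
  · rintro (i | j) (i₁ | j₁) (i₂ | j₂) h₁ h₂ hne <;>
      simp [completeBipartiteGraph] at h₁ h₂
    · intro h
      exact hne (congrArg Sum.inr (hrow i h))
    · intro h
      exact hne (congrArg Sum.inl (hcol j h))
  · rintro (i | j) (i₁ | j₁) h <;> simp [completeBipartiteGraph] at h
    · rw [palette_inl, palette_inr]
      exact key i j₁
    · rw [palette_inl, palette_inr]
      intro hsub
      refine key i₁ j (Set.eq_of_subset_of_ncard_le hsub ?_ (Set.finite_range _)).ge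
      rw [← Set.image_univ, ← Set.image_univ, Set.ncard_image_of_injective _ (hrow i₁),
        Set.ncard_image_of_injective _ (hcol j)]
      simpa [Set.ncard_univ] using hδΔ

/-- The `i`-th natural number (counting from `0`) that is not a multiple of `d + 1`. -/
def rowIndex (d i : ℕ) : ℕ := i + i / d + 1

lemma rowIndex_strictMono (d : ℕ) : StrictMono (rowIndex d) := by
  intro a b hab
  have := Nat.div_le_div_right (c := d) hab.le
  simp only [rowIndex]
  omega

lemma not_dvd_rowIndex {d : ℕ} (hd : 0 < d) (i : ℕ) : ¬ (d + 1) ∣ rowIndex d i := by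
  -- With `i = d * q + r` and `r < d`, the index is `(d + 1) * q + (r + 1)`.
  have h1 : rowIndex d i = (i % d + 1) + (d + 1) * (i / d) := by
    have := Nat.mod_add_div i d
    simp only [rowIndex]
    nlinarith
  have h2 := Nat.mod_lt i hd
  rw [h1, Nat.dvd_iff_mod_eq_zero, Nat.add_mul_mod_self_left, Nat.mod_eq_of_lt (by omega)]
  omega

lemma add_mod_inj {K a b j : ℕ} (ha : a < K) (hb : b < K) (h : (a + j) % K = (b + j) % K) :
    a = b := by
  have h' : a ≡ b [MOD K] := Nat.ModEq.add_right_cancel' j h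
  exact h'.eq_of_lt_of_lt ha hb

/-- Row `x` of the cyclic array contains a colour that column `j` takes in a row indexed by a
multiple of `d + 1`. -/
lemma exists_missing {d K x j : ℕ} (hx : x < K) (hj : j < d + 1) :
    ∃ k < d + 1, ∃ y < K, (d + 1) ∣ y ∧ (y + j) % K = (x + k) % K := by
  by_cases h : K + j ≤ x + d
  · refine ⟨K + j - x, by omega, 0, by omega, dvd_zero _, ?_⟩
    rw [show x + (K + j - x) = 0 + j + K by omega, Nat.add_mod_right]
  · -- `y` is the largest multiple of `d + 1` that is at most `x - j + d`.
    have h1 := Nat.div_add_mod (x + d - j) (d + 1)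
    have h2 := Nat.mod_lt (x + d - j) (show d + 1 > 0 by omega)
    refine ⟨(d + 1) * ((x + d - j) / (d + 1)) + j - x, by omega,
      (d + 1) * ((x + d - j) / (d + 1)), by omega, dvd_mul_right _ _, ?_⟩
    congr 1
    omega

theorem complete_bipartite_upper_bound (δ Δ : ℕ) (h2 : 2 ≤ δ) (hδΔ : δ ≤ Δ) :
    ∃ c : Sym2 (Fin Δ ⊕ Fin δ) → ℕ,
      IsInclusionFree (completeBipartiteGraph (Fin Δ) (Fin δ)) c ∧
      (c '' (completeBipartiteGraph (Fin Δ) (Fin δ)).edgeSet).ncard ≤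
        Δ + ⌈(Δ : ℝ) / ((δ : ℝ) - 1)⌉₊ := by
  obtain ⟨d, rfl⟩ : ∃ d, δ = d + 1 := ⟨δ - 1, by omega⟩
  have hd : 0 < d := by omega
  obtain ⟨K, hK⟩ : ∃ K, K = Δ + (Δ - 1) / d + 1 := ⟨_, rfl⟩
  have hdK : d + 1 < K := by
    have := Nat.zero_le ((Δ - 1) / d)
    omega
  have hlt : ∀ i : Fin Δ, rowIndex d i < K := by
    intro i
    have := Nat.div_le_div_right (c := d) (show (i : ℕ) ≤ Δ - 1 by omega)
    simp only [rowIndex]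
    omega
  have hKle : K ≤ Δ + ⌈(Δ : ℝ) / (((d + 1 : ℕ) : ℝ) - 1)⌉₊ := by
    have hq : (Δ - 1) / d < ⌈(Δ : ℝ) / (((d + 1 : ℕ) : ℝ) - 1)⌉₊ := by
      have hd' : (0 : ℝ) < d := by exact_mod_cast hd
      rw [Nat.lt_ceil, show (((d + 1 : ℕ) : ℝ) - 1) = d by push_cast; ring, lt_div_iff₀ hd']
      have : (Δ - 1) / d * d < Δ := by
        have := Nat.div_mul_le_self (Δ - 1) d
        omega
      exact_mod_cast this
    omega
  refine ⟨arrayColoring fun (i : Fin Δ) (j : Fin (d + 1)) => (rowIndex d i + j) % K,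
    isInclusionFree_arrayColoring hδΔ _ ?_ ?_ ?_, ?_⟩
  · intro i j j' h
    have h' : ((j : ℕ) + rowIndex d i) % K = ((j' : ℕ) + rowIndex d i) % K := by
      simpa [add_comm] using h
    exact Fin.ext (add_mod_inj (by omega) (by omega) h')
  · intro j i i' h
    exact Fin.ext ((rowIndex_strictMono d).injective (add_mod_inj (hlt i) (hlt i') h))
  · intro i j
    obtain ⟨k, hk, y, hy, hdvd, heq⟩ := exists_missing (hlt i) j.2
    refine ⟨⟨k, hk⟩, fun i' h => not_dvd_rowIndex hd i' ?_⟩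
    rwa [add_mod_inj (hlt i') hy (h.trans heq.symm)]
  · refine le_trans ?_ hKle
    have hsub : (arrayColoring fun (i : Fin Δ) (j : Fin (d + 1)) => (rowIndex d i + j) % K) ''
        (completeBipartiteGraph (Fin Δ) (Fin (d + 1))).edgeSet ⊆ Set.Iio K := by
      rintro _ ⟨e, -, rfl⟩
      have hK0 : 0 < K := by omega
      induction e with
      | _ u v =>
        rcases u with i | j <;> rcases v with i' | j' <;>
          first | exact hK0 | exact Nat.mod_lt _ hK0
    calc _ ≤ (Set.Iio K).ncard := Set.ncard_le_ncard hsub (Set.finite_Iio K)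
      _ = K := by simp [Set.ncard_eq_toFinset_card']
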